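/- arXiv:2201.03129 — 2 statements merged into one kernel-verified Lean document; each statement's English description precedes it below -/
import Mathlib

section
/- Let u_1,...,u_n, v_1,...,v_n be odd (pairwise anticommuting) variables in the exterior algebra over an integral domain of characteristic ≠ 2, with n ≥ 2. Then det(f_0 + f_1 t u_i v_j)_{i,j=1}^n = t^n(−1)^{C(n,2)} n! f_1^n · u_1···u_n · v_1···v_n + t^{n−1}(−1)^{C(n−1,2)}(n−1)! f_0 f_1^{n−1} · (Σ_{i=1}^n (−1)^{i−1} u_1···û_i···u_n) · (Σ_{j=1}^n (−1)^{j−1} v_1···v̂_j···v_n). In particular all coefficients of t^k for 0 ≤ k ≤ n−2 vanish. -/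
theorem aux_perm {A : Type*} [Ring A] {k : ℕ} (v : Fin k → A)
    (hv : ∀ i j, v i * v j = -(v j * v i)) (hv2 : ∀ i, v i * v i = 0) (σ : Equiv.Perm (Fin k)) :
    (List.ofFn (fun i => v (σ i))).prod = (Equiv.Perm.sign σ : ℤ) • (List.ofFn v).prod := by
  have hf : ∀ m : Fin k → ℤ, Fintype.linearCombination ℤ v m * Fintype.linearCombination ℤ v m = 0 := by
    intro m
    simp only [Fintype.linearCombination_apply]
    rw [Finset.sum_mul_sum, ← Finset.sum_product']
    refine Finset.sum_involution (fun p _ => (p.2, p.1)) ?_ ?_ (by simp) (by simp)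
    · rintro ⟨i, j⟩ -
      simp only [smul_mul_smul_comm]
      rw [hv i j, mul_comm (m j)]
      simp
    · rintro ⟨i, j⟩ - h heq
      apply h
      simp only [Prod.mk.injEq] at heq
      obtain ⟨rfl, -⟩ := heq
      change m j • v j * m j • v j = 0
      rw [smul_mul_smul_comm, hv2, smul_zero]
  let F := ExteriorAlgebra.lift ℤ ⟨Fintype.linearCombination ℤ v, hf⟩
  have key : ∀ g : Fin k → Fin k, F (ExteriorAlgebra.ιMulti ℤ k (fun i => Pi.single (g i) (1 : ℤ))) =
      (List.ofFn (fun i => v (g i))).prod := by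
    intro g
    rw [ExteriorAlgebra.ιMulti_apply, map_list_prod, List.map_ofFn]
    congr 2
    funext i
    simp only [F, Function.comp, ExteriorAlgebra.lift_ι_apply]
    simp [Fintype.linearCombination_apply_single]
  have h := (ExteriorAlgebra.ιMulti ℤ k).map_perm (fun i : Fin k => (Pi.single i (1 : ℤ) : Fin k → ℤ)) σ
  have h' := congrArg F h
  have e1 := key σ
  have e2 := key id
  simp only [id] at e2
  rw [← e1, ← e2, ← map_zsmul]
  exact h'

theorem aux_move {A : Type*} [Ring A] (w : A) : ∀ {k : ℕ} (U : Fin k → A)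
    (_ : ∀ i, U i * w = -(w * U i)),
    w * (List.ofFn U).prod = (-1) ^ k * ((List.ofFn U).prod * w) := by
  intro k
  induction k with
  | zero => intro U _; simp
  | succ k ih =>
    intro U h
    rw [List.ofFn_succ, List.prod_cons, ← mul_assoc, ← neg_eq_iff_eq_neg.mpr (h 0), neg_mul,
      mul_assoc, ih (fun i => U i.succ) (fun i => h _), pow_succ]
    rcases neg_one_pow_eq_or A k with e | e <;> rw [e] <;> simp [mul_assoc]

theorem aux_split {A : Type*} [Ring A] : ∀ {k : ℕ} (U W : Fin k → A)
    (_ : ∀ i j, U i * W j = -(W j * U i)),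
    (List.ofFn (fun i => U i * W i)).prod =
      (-1) ^ (k.choose 2) * ((List.ofFn U).prod * (List.ofFn W).prod) := by
  intro k
  induction k with
  | zero => intro U W _; simp
  | succ k ih =>
    intro U W h
    have hm := aux_move (W 0) (fun i => U (Fin.succ i)) (fun i => h _ _)
    rw [List.ofFn_succ, List.prod_cons, ih _ _ (fun i j => h _ _), List.ofFn_succ (f := U),
      List.ofFn_succ (f := W), List.prod_cons, List.prod_cons,
      Nat.choose_succ_succ' k 1, Nat.choose_one_right, pow_add]
    set P := (List.ofFn (fun i => U (Fin.succ i))).prod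
    set Q := (List.ofFn (fun i => W (Fin.succ i))).prod
    have : U 0 * P * (W 0 * Q) = (-1) ^ k * (U 0 * W 0 * (P * Q)) := by
      have h1 : P * W 0 = (-1) ^ k * (W 0 * P) := by
        rw [hm]
        rcases neg_one_pow_eq_or A k with e | e <;> rw [e] <;> simp
      calc U 0 * P * (W 0 * Q) = U 0 * (P * W 0) * Q := by noncomm_ring
        _ = _ := by
          rw [h1]
          rcases neg_one_pow_eq_or A k with e | e <;> rw [e] <;> simp [mul_assoc]
    rw [this]
    rcases neg_one_pow_eq_or A k with e | e <;>
      rcases neg_one_pow_eq_or A (k.choose 2) with e' | e' <;> rw [e, e'] <;> simp [mul_assoc]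

theorem aux_map_det {A S : Type*} [Ring A] [CommRing S] (φ : S →+* A) {k : ℕ}
    (M : Matrix (Fin k) (Fin k) S) :
    φ M.det = ∑ σ : Equiv.Perm (Fin k), (Equiv.Perm.sign σ : ℤ) •
      (List.ofFn (fun i => φ (M i (σ i)))).prod := by
  rw [← Matrix.det_transpose, Matrix.det_apply, map_sum]
  refine Finset.sum_congr rfl fun σ _ => ?_
  rw [← List.prod_ofFn, Units.smul_def, map_zsmul, map_list_prod, List.map_ofFn]
  rfl

theorem aux_det {A S : Type*} [Ring A] [CommRing S] (φ : S →+* A) {k : ℕ}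
    (M : Matrix (Fin k) (Fin k) S) (U V : Fin k → A) (hM : ∀ i j, φ (M i j) = U i * V j)
    (hv : ∀ i j, V i * V j = -(V j * V i)) (hv2 : ∀ i, V i * V i = 0)
    (huv : ∀ i j, U i * V j = -(V j * U i)) :
    φ M.det = (-1) ^ (k.choose 2) * (k.factorial : A) *
      ((List.ofFn U).prod * (List.ofFn V).prod) := by
  rw [aux_map_det]
  have : ∀ σ ∈ (Finset.univ : Finset (Equiv.Perm (Fin k))), (Equiv.Perm.sign σ : ℤ) •
      (List.ofFn (fun i => φ (M i (σ i)))).prod =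
      (-1) ^ (k.choose 2) * ((List.ofFn U).prod * (List.ofFn V).prod) := by
    intro σ _
    simp only [hM]
    rw [aux_split U (fun i => V (σ i)) (fun i j => huv _ _), aux_perm V hv hv2 σ]
    rcases Int.units_eq_one_or (Equiv.Perm.sign σ) with e | e <;> rw [e] <;> simp
  rw [Finset.sum_congr rfl this, Finset.sum_const, Finset.card_univ, Fintype.card_perm,
    Fintype.card_fin, nsmul_eq_mul, mul_assoc, ← mul_assoc, Nat.cast_comm, mul_assoc]

theorem aux_rank_one {S : Type*} [CommRing S] {k : ℕ} (M : Matrix (Fin k) (Fin k) S) (c : S) :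
    (Matrix.of fun i j => c + M i j).det = M.det + c * ∑ i, ∑ j, M.adjugate j i := by
  have h := (Matrix.detRowAlternating (n := Fin k) (R := S)).toMultilinearMap.map_add_univ
    M (fun _ _ => c)
  have e : (Matrix.of fun i j => c + M i j) = M + (Matrix.of fun _ _ => c) := by
    ext i j; simp [add_comm]
  have h' : (Matrix.of fun i j => c + M i j).det =
      ∑ s : Finset (Fin k), (Matrix.of fun i j => if i ∈ s then M i j else c).det := by
    rw [e]
    refine Eq.trans h (Finset.sum_congr rfl fun s _ => ?_)
    change Matrix.det _ = _
    congr 1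
    ext i j
    change (Finset.piecewise s (fun a b => M a b) (fun _ _ => c) : Fin k → Fin k → S) i j = _
    by_cases hi : i ∈ s <;> simp [Finset.piecewise, hi]
  rw [h']
  have hz : ∀ s : Finset (Fin k), s ∉ insert Finset.univ
      (Finset.univ.image fun i : Fin k => Finset.univ.erase i) →
      (Matrix.of fun i j => if i ∈ s then M i j else c).det = 0 := by
    intro s hs
    simp only [Finset.mem_insert, Finset.mem_image, Finset.mem_univ, true_and, not_or,
      not_exists] at hs
    obtain ⟨h1, h2⟩ := hs
    obtain ⟨a, ha⟩ : ∃ a, a ∉ s := by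
      by_contra! hh; exact h1 (Finset.eq_univ_iff_forall.mpr hh)
    obtain ⟨b, hb, hab⟩ : ∃ b, b ∉ s ∧ b ≠ a := by
      by_contra! hh
      apply h2 a
      ext x
      simp only [Finset.mem_erase, Finset.mem_univ, and_true]
      constructor
      · intro hx; by_contra hxs; exact hx (hh x hxs)
      · rintro hx rfl; exact ha hx
    refine Matrix.det_zero_of_row_eq hab ?_
    funext j
    simp [ha, hb]
  rw [← Finset.sum_subset (Finset.subset_univ _) (fun s _ hs => hz s hs), Finset.sum_insert,
    Finset.sum_image]
  · congr 1
    · congr 1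
      ext i j
      simp
    · rw [Finset.mul_sum]
      refine Finset.sum_congr rfl fun i _ => ?_
      have e2 : (Matrix.of fun a j => if a ∈ Finset.univ.erase i then M a j else c) =
          Matrix.updateRow M i (fun _ => c) := by
        ext a j
        by_cases ha : a = i
        · subst ha; simp
        · simp [ha]
      rw [e2, Matrix.det_eq_sum_mul_adjugate_row _ i, Finset.mul_sum]
      refine Finset.sum_congr rfl fun j _ => ?_
      rw [Matrix.adjugate_apply, Matrix.adjugate_apply]
      simp
  · intro a _ b _ hab
    by_contra hne
    have : a ∈ (Finset.univ.erase b) := by simp [hne]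
    simp only at hab
    rw [← hab] at this
    simp at this
  · simp only [Finset.mem_image, Finset.mem_univ, true_and, not_exists]
    intro x hx
    have : x ∈ (Finset.univ.erase x) := by rw [hx]; simp
    simp at this

theorem aux_sort {m : ℕ} (i : Fin (m + 1)) :
    ((Finset.univ : Finset (Fin (m + 1))).erase i).sort (· ≤ ·) = List.ofFn i.succAbove := by
  refine List.Perm.eq_of_pairwise' (r := (· ≤ ·)) (Finset.pairwise_sort _ _) ?_ ?_
  · rw [List.pairwise_ofFn]
    intro a b hab
    exact (Fin.strictMono_succAbove i hab).le
  · rw [List.perm_ext_iff_of_nodup (Finset.sort_nodup _ _)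
      (List.nodup_ofFn.mpr Fin.succAbove_right_injective)]
    intro a
    simp [List.mem_ofFn, Fin.exists_succAbove_eq_iff]

theorem aux_main {A S : Type*} [Ring A] [CommRing S] (φ : S →+* A) {m : ℕ}
    (M : Matrix (Fin (m + 1)) (Fin (m + 1)) S) (c : S) (U V : Fin (m + 1) → A)
    (hM : ∀ i j, φ (M i j) = U i * V j)
    (hv : ∀ i j, V i * V j = -(V j * V i)) (hv2 : ∀ i, V i * V i = 0)
    (huv : ∀ i j, U i * V j = -(V j * U i)) :
    (∑ σ : Equiv.Perm (Fin (m + 1)), (Equiv.Perm.sign σ : ℤ) •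
      (List.ofFn (fun i => φ c + U i * V (σ i))).prod) =
    (-1) ^ ((m + 1).choose 2) * ((m + 1).factorial : A) *
      ((List.ofFn U).prod * (List.ofFn V).prod) +
    φ c * ((-1) ^ (m.choose 2) * (m.factorial : A) *
      ((∑ i : Fin (m + 1), (-1) ^ (i : ℕ) * (List.ofFn (fun a => U (i.succAbove a))).prod) *
      (∑ j : Fin (m + 1), (-1) ^ (j : ℕ) * (List.ofFn (fun a => V (j.succAbove a))).prod))) := by
  have h := aux_map_det φ (Matrix.of fun i j => c + M i j)
  simp only [Matrix.of_apply, map_add, hM] at h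
  rw [← h, aux_rank_one, map_add, map_mul, aux_det φ M U V hM hv hv2 huv]
  congr 2
  rw [map_sum, Finset.sum_mul, Finset.mul_sum]
  refine Finset.sum_congr rfl fun i _ => ?_
  rw [map_sum, Finset.mul_sum, Finset.mul_sum]
  refine Finset.sum_congr rfl fun j _ => ?_
  rw [Matrix.adjugate_fin_succ_eq_det_submatrix, map_mul,
    aux_det φ _ (fun a => U (i.succAbove a)) (fun a => V (j.succAbove a))
      (fun a b => by simp [hM]) (fun _ _ => hv _ _) (fun _ => hv2 _) (fun _ _ => huv _ _)]
  rw [map_pow, map_neg, map_one, pow_add]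
  rcases neg_one_pow_eq_or A i with e | e <;>
    rcases neg_one_pow_eq_or A j with e' | e' <;> rw [e, e'] <;> simp

theorem aux_alg {R A : Type*} [CommRing R] [Ring A] [Algebra R A] {m : ℕ} (c : R)
    (U V : Fin (m + 1) → A)
    (hu : ∀ i j, U i * U j = -(U j * U i))
    (hv : ∀ i j, V i * V j = -(V j * V i)) (hv2 : ∀ i, V i * V i = 0)
    (huv : ∀ i j, U i * V j = -(V j * U i)) :
    (∑ σ : Equiv.Perm (Fin (m + 1)), (Equiv.Perm.sign σ : ℤ) •
      (List.ofFn (fun i => algebraMap R A c + U i * V (σ i))).prod) =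
    (-1) ^ ((m + 1).choose 2) * ((m + 1).factorial : A) *
      ((List.ofFn U).prod * (List.ofFn V).prod) +
    algebraMap R A c * ((-1) ^ (m.choose 2) * (m.factorial : A) *
      ((∑ i : Fin (m + 1), (-1) ^ (i : ℕ) * (List.ofFn (fun a => U (i.succAbove a))).prod) *
      (∑ j : Fin (m + 1), (-1) ^ (j : ℕ) * (List.ofFn (fun a => V (j.succAbove a))).prod))) := by
  let s : Set A := Set.range fun p : Fin (m + 1) × Fin (m + 1) => U p.1 * V p.2
  have hs : ∀ a ∈ s, ∀ b ∈ s, a * b = b * a := by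
    rintro _ ⟨⟨i, j⟩, rfl⟩ _ ⟨⟨k, l⟩, rfl⟩
    simp only
    calc U i * V j * (U k * V l) = U i * (V j * U k) * V l := by noncomm_ring
      _ = -((U i * U k) * (V j * V l)) := by
        rw [← neg_eq_iff_eq_neg.mpr (huv k j)]; noncomm_ring
      _ = -((U k * U i) * (V l * V j)) := by rw [hu i k, hv j l]; noncomm_ring
      _ = U k * (V l * U i) * V j := by
        rw [← neg_eq_iff_eq_neg.mpr (huv i l)]; noncomm_ring
      _ = _ := by noncomm_ring
  let _ : CommRing (Algebra.adjoin R s) :=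
    { (inferInstance : Ring (Algebra.adjoin R s)) with
      mul_comm := (Algebra.isMulCommutative_adjoin R hs).is_comm.comm }
  let φ : Algebra.adjoin R s →+* A := (Algebra.adjoin R s).val.toRingHom
  exact aux_main φ (fun i j => ⟨U i * V j, Algebra.subset_adjoin ⟨(i, j), rfl⟩⟩)
    ⟨algebraMap R A c, Subalgebra.algebraMap_mem _ _⟩ U V (fun i j => rfl) hv hv2 huv

theorem aux_scal {A : Type*} [Ring A] (d : A) (hd : ∀ x, Commute d x) : ∀ {k : ℕ} (U : Fin k → A),
    (List.ofFn (fun i => d * U i)).prod = d ^ k * (List.ofFn U).prod := by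
  intro k
  induction k with
  | zero => intro U; simp
  | succ k ih =>
    intro U
    rw [List.ofFn_succ, List.prod_cons, ih, List.ofFn_succ (f := U), List.prod_cons, pow_succ']
    have := ((hd (U 0)).pow_left k).eq
    simp only [mul_assoc]
    rw [← mul_assoc (U 0), ← this, mul_assoc]

/-- Fermionic determinant identity: for pairwise anticommuting odd variables
`u_1,…,u_n, v_1,…,v_n` (squaring to zero) over an integral domain of characteristic ≠ 2,
`det (f_0 + f_1 t u_i v_j) = t^n (-1)^{C(n,2)} n! f_1^n u_1⋯u_n v_1⋯v_n
 + t^{n-1} (-1)^{C(n-1,2)} (n-1)! f_0 f_1^{n-1}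
   (∑_i (-1)^{i-1} u_1⋯û_i⋯u_n)(∑_j (-1)^{j-1} v_1⋯v̂_j⋯v_n)`,
with the determinant given by the Leibniz sum (the entries pairwise commute). -/
theorem stmt6 (R : Type*) [CommRing R] [IsDomain R] (h2 : (2 : R) ≠ 0)
    (Λ : Type*) [Ring Λ] [Algebra R Λ] (n : ℕ) (hn : 2 ≤ n)
    (u v : Fin n → Λ)
    (hu : ∀ i j, u i * u j = -(u j * u i)) (hu2 : ∀ i, u i * u i = 0)
    (hv : ∀ i j, v i * v j = -(v j * v i)) (hv2 : ∀ i, v i * v i = 0)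
    (huv : ∀ i j, u i * v j = -(v j * u i)) (f0 f1 : R) :
    (∑ σ : Equiv.Perm (Fin n), (Equiv.Perm.sign σ : ℤ) •
      ((List.finRange n).map (fun i =>
        Polynomial.C (algebraMap R Λ f0) +
        Polynomial.C (algebraMap R Λ f1) * Polynomial.X *
          Polynomial.C (u i) * Polynomial.C (v (σ i)))).prod) =
    Polynomial.X ^ n * ((-1 : Polynomial Λ) ^ (n.choose 2) * (n.factorial : Polynomial Λ) *
      Polynomial.C (algebraMap R Λ (f1 ^ n)) *
      Polynomial.C (((List.finRange n).map u).prod) *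
      Polynomial.C (((List.finRange n).map v).prod)) +
    Polynomial.X ^ (n - 1) * ((-1 : Polynomial Λ) ^ ((n - 1).choose 2) *
      ((n - 1).factorial : Polynomial Λ) *
      Polynomial.C (algebraMap R Λ (f0 * f1 ^ (n - 1))) *
      Polynomial.C (∑ i : Fin n, (-1 : Λ) ^ (i : ℕ) *
        ((((Finset.univ : Finset (Fin n)).erase i).sort (· ≤ ·)).map u).prod) *
      Polynomial.C (∑ j : Fin n, (-1 : Λ) ^ (j : ℕ) *
        ((((Finset.univ : Finset (Fin n)).erase j).sort (· ≤ ·)).map v).prod)) := by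
  obtain ⟨m, rfl⟩ : ∃ m, n = m + 1 := ⟨n - 1, by omega⟩
  open Polynomial in
  have hA : ∀ r : R, C (algebraMap R Λ r) = algebraMap R Λ[X] r := fun r => rfl
  set d : Polynomial Λ := Polynomial.C (algebraMap R Λ f1) * Polynomial.X with hd
  have hdc : ∀ x, Commute d x := by
    intro x
    rw [hd, hA]
    exact Commute.mul_left (Algebra.commutes _ _) (Polynomial.commute_X x)
  have hdm : ∀ x y z w : Polynomial Λ, x * y = -(z * w) → d * x * y = -(z * (d * w)) := by
    intro x y z w h
    rw [mul_assoc, h, mul_neg, ← mul_assoc, (hdc z).eq, mul_assoc]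
  have hC : ∀ a b c e : Λ, a * b = -(c * e) → Polynomial.C a * Polynomial.C b =
      -(Polynomial.C c * Polynomial.C e) := by
    intro a b c e h
    rw [← Polynomial.C_mul, h, Polynomial.C_neg, Polynomial.C_mul]
  have hCl : ∀ (k : ℕ) (f : Fin k → Λ), Polynomial.C (List.ofFn f).prod =
      (List.ofFn (fun i => Polynomial.C (f i))).prod := by
    intro k f
    rw [map_list_prod, List.map_ofFn]; rfl
  have key := aux_alg (A := Polynomial Λ) f0 (fun i => d * Polynomial.C (u i))
    (fun i => Polynomial.C (v i))
    (fun i j => by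
      have hh : ∀ x y : Polynomial Λ, d * x * (d * y) = d * d * (x * y) := by
        intro x y
        rw [mul_assoc, ← mul_assoc x, ← (hdc x).eq]
        simp only [mul_assoc]
      simp only [hh]
      rw [hC _ _ _ _ (hu i j), mul_neg])
    (fun i j => hC _ _ _ _ (hv i j))
    (fun i => by rw [← Polynomial.C_mul, hv2, Polynomial.C_0])
    (fun i j => hdm _ _ _ _ (hC _ _ _ _ (huv i j)))
  simp only [aux_scal d hdc] at key
  simp only [← List.ofFn_eq_map, aux_sort, List.map_ofFn, Nat.add_sub_cancel, Function.comp_def]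
  simp only [map_sum, Polynomial.C_mul, Polynomial.C_pow, Polynomial.C_neg, Polynomial.C_1, hCl,
    map_mul, hA, map_pow] at key ⊢
  rw [key]
  have hneg : ∀ (a : ℕ) (x : Polynomial Λ), Commute ((-1 : Polynomial Λ) ^ a) x := fun a x =>
    (Commute.neg_one_left x).pow_left a
  have hs : (∑ i : Fin (m + 1), (-1 : Polynomial Λ) ^ (i : ℕ) *
      (d ^ m * (List.ofFn (fun a => Polynomial.C (u (i.succAbove a)))).prod)) =
      d ^ m * ∑ i : Fin (m + 1), (-1 : Polynomial Λ) ^ (i : ℕ) *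
        (List.ofFn (fun a => Polynomial.C (u (i.succAbove a)))).prod := by
    rw [Finset.mul_sum]
    refine Finset.sum_congr rfl fun i _ => ?_
    rw [← mul_assoc, (hneg _ _).eq, mul_assoc]
  rw [hs]
  generalize (∑ i : Fin (m + 1), (-1 : Polynomial Λ) ^ (i : ℕ) *
        (List.ofFn (fun a => Polynomial.C (u (i.succAbove a)))).prod) = SU
  generalize (∑ i : Fin (m + 1), (-1 : Polynomial Λ) ^ (i : ℕ) *
        (List.ofFn (fun a => Polynomial.C (v (i.succAbove a)))).prod) = SV
  generalize (List.ofFn (fun i => Polynomial.C (u i))).prod = PU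
  generalize (List.ofFn (fun i => Polynomial.C (v i))).prod = PV
  have hdp : ∀ k : ℕ, d ^ k = Polynomial.X ^ k * algebraMap R (Polynomial Λ) f1 ^ k := by
    intro k
    have hc : Commute (algebraMap R (Polynomial Λ) f1) Polynomial.X := Algebra.commutes _ _
    rw [hd, hA, hc.mul_pow, (hc.pow_pow k k).eq]
  have hX : ∀ (k : ℕ) (x : Polynomial Λ), Commute (Polynomial.X ^ k) x := fun k x =>
    (Polynomial.commute_X x).pow_left k
  have hf0 : ∀ x : Polynomial Λ, Commute (algebraMap R (Polynomial Λ) f0) x := fun x =>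
    Algebra.commutes _ _
  have e : ∀ (k : ℕ) (N P Q : Polynomial Λ), N * (d ^ k * P * Q) =
      Polynomial.X ^ k * (N * algebraMap R (Polynomial Λ) f1 ^ k * P * Q) := by
    intro k N P Q
    rw [hdp]
    simp only [← mul_assoc]
    rw [(hX k N).eq]
  rw [e, e]
  congr 1
  rw [← mul_assoc, (hf0 _).eq, mul_assoc]
  congr 1
  simp only [← mul_assoc]
  congr 3
  rw [(hf0 _).eq]
  simp only [mul_assoc]
  rw [(hf0 _).eq]
end

section
/- Dual Cauchy product identity: for commuting variables u_1,...,u_n, v_1,...,v_n, ∏_{i=1}^n ∏_{j=1}^n (1 + u_i v_j) = Σ_m s_m(u) s_{m'}(v), where the sum is over all partitions m fitting in an n×n box (i.e., with at most n parts each of size at most n), m' is the conjugate (dual) partition, and s denotes the Schur polynomial in n variables. -/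
open scoped Classical

namespace DualCauchy

/-- conjugate partition -/
def cj {n : ℕ} (m : Fin n → Fin (n + 1)) (j : Fin n) : ℕ :=
  (Finset.univ.filter (fun i : Fin n => (j : ℕ) + 1 ≤ (m i : ℕ))).card

lemma cj_le {n : ℕ} (m : Fin n → Fin (n + 1)) (j : Fin n) : cj m j ≤ n := by
  unfold cj
  exact (Finset.card_le_univ _).trans (by simp)

lemma lt_cj_iff {n : ℕ} (m : Fin n → Fin (n + 1)) (h : Antitone (fun i => (m i : ℕ)))
    (i j : Fin n) : (i : ℕ) < cj m j ↔ (j : ℕ) + 1 ≤ (m i : ℕ) := by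
  constructor
  · intro hi
    by_contra hc
    have : cj m j ≤ (Finset.Iio i).card := by
      apply Finset.card_le_card
      intro k hk
      simp only [Finset.mem_filter, Finset.mem_univ, true_and, Finset.mem_Iio] at hk ⊢
      by_contra hki
      have := h (not_lt.mp hki)
      simp only at this
      omega
    rw [Fin.card_Iio] at this
    omega
  · intro hi
    have : (Finset.Iic i).card ≤ cj m j := by
      apply Finset.card_le_card
      intro k hk
      simp only [Finset.mem_filter, Finset.mem_univ, true_and, Finset.mem_Iic] at hk ⊢
      have := h hk
      simp only at this
      omega
    rw [Fin.card_Iic] at this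
    omega

lemma cj_anti {n : ℕ} (m : Fin n → Fin (n + 1)) {j k : Fin n} (h : j ≤ k) :
    cj m k ≤ cj m j := by
  apply Finset.card_le_card
  intro i hi
  simp only [Finset.mem_filter, Finset.mem_univ, true_and] at hi ⊢
  have : (j : ℕ) ≤ k := h
  omega

/-- the column enumeration attached to a partition -/
def ef {n : ℕ} (m : Fin n → Fin (n + 1)) : Fin n ⊕ Fin n → Fin (n + n)
  | Sum.inl i => ⟨(m i : ℕ) + (n - 1 - (i : ℕ)), by omega⟩
  | Sum.inr j => ⟨n + (j : ℕ) - cj m j, by omega⟩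

lemma ef_ll {n : ℕ} (m : Fin n → Fin (n + 1)) (h : Antitone (fun i => (m i : ℕ)))
    {i k : Fin n} (hik : i < k) : ef m (Sum.inl k) < ef m (Sum.inl i) := by
  have := h hik.le
  have h2 : (i : ℕ) < k := hik
  simp only [ef, Fin.mk_lt_mk] at this ⊢
  omega

lemma ef_rr {n : ℕ} (m : Fin n → Fin (n + 1))
    {i k : Fin n} (hik : i < k) : ef m (Sum.inr i) < ef m (Sum.inr k) := by
  have := cj_anti m hik.le
  have h2 : (i : ℕ) < k := hik
  have := cj_le m i
  simp only [ef, Fin.mk_lt_mk] at this ⊢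
  omega

lemma ef_lr {n : ℕ} (m : Fin n → Fin (n + 1)) (h : Antitone (fun i => (m i : ℕ)))
    (i j : Fin n) :
    ((j : ℕ) + 1 ≤ (m i : ℕ) ∧ ef m (Sum.inr j) < ef m (Sum.inl i)) ∨
    (¬ (j : ℕ) + 1 ≤ (m i : ℕ) ∧ ef m (Sum.inl i) < ef m (Sum.inr j)) := by
  have h1 := lt_cj_iff m h i j
  have := cj_le m j
  simp only [ef, Fin.mk_lt_mk]
  by_cases hc : (j : ℕ) + 1 ≤ (m i : ℕ)
  · left
    have := h1.mpr hc
    omega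
  · right
    have := mt h1.mp hc
    omega

lemma ef_inj {n : ℕ} (m : Fin n → Fin (n + 1)) (h : Antitone (fun i => (m i : ℕ))) :
    Function.Injective (ef m) := by
  rintro (i | i) (j | j) hij
  · rcases lt_trichotomy i j with h1 | h1 | h1
    · exact absurd hij (ef_ll m h h1).ne'
    · rw [h1]
    · exact absurd hij (ef_ll m h h1).ne
  · rcases ef_lr m h i j with h1 | h1
    · exact absurd hij h1.2.ne'
    · exact absurd hij h1.2.ne
  · rcases ef_lr m h j i with h1 | h1
    · exact absurd hij h1.2.ne
    · exact absurd hij h1.2.ne'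
  · rcases lt_trichotomy i j with h1 | h1 | h1
    · exact absurd hij (ef_rr m h1).ne
    · rw [h1]
    · exact absurd hij (ef_rr m h1).ne'

/-- as an equivalence -/
noncomputable def ee {n : ℕ} (m : Fin n → Fin (n + 1)) (h : Antitone (fun i => (m i : ℕ))) :
    Fin n ⊕ Fin n ≃ Fin (n + n) :=
  Equiv.ofBijective (ef m) ((Fintype.bijective_iff_injective_and_card _).mpr
    ⟨ef_inj m h, by simp⟩)

lemma ee_apply {n : ℕ} (m : Fin n → Fin (n + 1)) (h : Antitone (fun i => (m i : ℕ))) (x) :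
    ee m h x = ef m x := rfl

/-- splitting a product over pairs -/
lemma prod_split {R : Type*} [CommMonoid R] (n : ℕ) (f : Fin (n + n) → Fin (n + n) → R) :
    (∏ i, ∏ j ∈ Finset.Ioi i, f i j) =
    (∏ i : Fin n, ∏ j ∈ Finset.Ioi i, f (Fin.castAdd n i) (Fin.castAdd n j)) *
    (∏ i : Fin n, ∏ j : Fin n, f (Fin.castAdd n i) (Fin.natAdd n j)) *
    (∏ i : Fin n, ∏ j ∈ Finset.Ioi i, f (Fin.natAdd n i) (Fin.natAdd n j)) := by
  have key : ∀ (N : ℕ) (g : Fin N → Fin N → R),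
      (∏ i, ∏ j ∈ Finset.Ioi i, g i j) = ∏ i, ∏ j, if i < j then g i j else 1 := by
    intro N g
    refine Finset.prod_congr rfl fun i _ => ?_
    rw [← Finset.prod_filter]
    congr 1
    ext j
    simp
  rw [key, key, key, Fin.prod_univ_add]
  conv_rhs => rw [← Finset.prod_mul_distrib]
  congr 1
  · refine Finset.prod_congr rfl fun i _ => ?_
    rw [Fin.prod_univ_add]
    congr 1
    refine Finset.prod_congr rfl fun j _ => ?_
    rw [if_pos]
    simp only [Fin.lt_def, Fin.val_castAdd, Fin.val_natAdd]
    omega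
  · refine Finset.prod_congr rfl fun i _ => ?_
    rw [Fin.prod_univ_add]
    have : ∀ j : Fin n, ¬ (Fin.natAdd n i < Fin.castAdd n j) := by
      intro j
      simp only [Fin.lt_def, Fin.val_castAdd, Fin.val_natAdd]
      omega
    simp only [this, if_false, Finset.prod_const_one, one_mul, Fin.natAdd_lt_natAdd_iff]

lemma sign_ee {n : ℕ} (m : Fin n → Fin (n + 1)) (h : Antitone (fun i => (m i : ℕ))) :
    Equiv.Perm.sign (finSumFinEquiv.symm.trans (ee m h)) =
      (∏ i : Fin n, ∏ _j ∈ Finset.Ioi i, (-1 : ℤˣ)) * ∏ j : Fin n, (-1) ^ cj m j := by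
  rw [Equiv.Perm.sign_eq_prod_prod_Ioi, prod_split]
  simp only [Equiv.trans_apply, finSumFinEquiv_symm_apply_castAdd,
    finSumFinEquiv_symm_apply_natAdd, ee_apply]
  have h1 : (∏ i : Fin n, ∏ j ∈ Finset.Ioi i,
      if ef m (Sum.inr i) < ef m (Sum.inr j) then (1 : ℤˣ) else -1) = 1 := by
    refine Finset.prod_eq_one fun i _ => Finset.prod_eq_one fun j hj => ?_
    rw [if_pos (ef_rr m (Finset.mem_Ioi.mp hj))]
  rw [h1, mul_one]
  congr 1
  · refine Finset.prod_congr rfl fun i _ => Finset.prod_congr rfl fun j hj => ?_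
    rw [if_neg (not_lt.mpr (ef_ll m h (Finset.mem_Ioi.mp hj)).le)]
  · rw [Finset.prod_comm]
    refine Finset.prod_congr rfl fun j _ => ?_
    unfold cj
    rw [← Finset.prod_const, Finset.prod_filter]
    refine Finset.prod_congr rfl fun i _ => ?_
    rcases ef_lr m h i j with ⟨h1, h2⟩ | ⟨h1, h2⟩
    · rw [if_pos h1, if_neg (not_lt.mpr h2.le)]
    · rw [if_neg h1, if_pos h2]

/-- the permutation attached to a triple -/
noncomputable def pp {n : ℕ}
    (x : {m : Fin n → Fin (n + 1) // Antitone (fun i => (m i : ℕ))} ×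
      (Equiv.Perm (Fin n) × Equiv.Perm (Fin n))) : Fin n ⊕ Fin n ≃ Fin (n + n) :=
  (Equiv.Perm.sumCongr x.2.1 x.2.2).trans (ee x.1.1 x.1.2)

lemma pp_inj {n : ℕ} : Function.Injective (pp (n := n)) := by
  rintro ⟨⟨m, hm⟩, σ, τ⟩ ⟨⟨m', hm'⟩, σ', τ'⟩ h
  have hl : ∀ i, ef m (Sum.inl (σ i)) = ef m' (Sum.inl (σ' i)) := fun i => by
    simpa [pp, ee_apply] using congrArg (fun e => e (Sum.inl i)) h
  have hr : Set.range (fun i => ef m (Sum.inl (Fin.rev i))) =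
      Set.range (fun i => ef m' (Sum.inl (Fin.rev i))) := by
    ext y
    constructor
    · rintro ⟨i, rfl⟩
      exact ⟨Fin.rev (σ' (σ.symm (Fin.rev i))), by simp [← hl]⟩
    · rintro ⟨i, rfl⟩
      exact ⟨Fin.rev (σ (σ'.symm (Fin.rev i))), by simp [hl]⟩
  have hmm : m = m' := by
    have := (StrictMono.range_inj (fun i j hij => ef_ll m hm (Fin.rev_lt_rev.mpr hij))
      (fun i j hij => ef_ll m' hm' (Fin.rev_lt_rev.mpr hij))).mp hr
    funext i
    have := congrFun this (Fin.rev i)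
    simp only [Fin.rev_rev, ef, Fin.mk.injEq] at this
    exact Fin.ext (by omega)
  subst hmm
  have : Equiv.Perm.sumCongr σ τ = Equiv.Perm.sumCongr σ' τ' := by
    ext1 x
    exact (ee m hm).injective (congrArg (fun e => e x) h)
  have := Equiv.Perm.sumCongrHom_injective (a₁ := (σ, τ)) (a₂ := (σ', τ')) this
  rw [this]

lemma pp_surj {n : ℕ} : Function.Surjective (pp (n := n)) := by
  intro P
  let a : Fin n → Fin (n + n) := fun i => P (Sum.inl i)
  have ha : Function.Injective a := fun i j h => Sum.inl_injective (P.injective h)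
  let b : Fin n → Fin (n + n) := fun i => a (Tuple.sort a (Fin.rev i))
  have hb : ∀ {i j}, i < j → (b j : ℕ) < b i := by
    intro i j hij
    have h1 : b j ≤ b i := Tuple.monotone_sort a (Fin.rev_le_rev.mpr hij.le)
    refine lt_of_le_of_ne h1 fun h2 => hij.ne ?_
    have h3 := (Tuple.sort a).injective (ha (Fin.ext h2))
    exact (Fin.rev_injective h3).symm
  have hup : ∀ k (i : Fin n), (i : ℕ) = k → (b i : ℕ) + k ≤ n + n - 1 := by
    intro k
    induction k with
    | zero => intro i _; omega
    | succ k ih =>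
      intro i hi
      have h1 := ih ⟨k, by omega⟩ rfl
      have h2 := hb (i := ⟨k, by omega⟩) (j := i) (by rw [Fin.lt_def]; simp; omega)
      omega
  have hlo : ∀ k (i : Fin n), n - 1 - (i : ℕ) = k → k ≤ (b i : ℕ) := by
    intro k
    induction k with
    | zero => intro i _; omega
    | succ k ih =>
      intro i hi
      have h1 := ih ⟨i + 1, by omega⟩ (by simp; omega)
      have h2 := hb (i := i) (j := ⟨i + 1, by omega⟩) (by rw [Fin.lt_def]; simp)
      omega
  let m : Fin n → Fin (n + 1) := fun i => ⟨(b i : ℕ) - (n - 1 - (i : ℕ)), by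
    have := hup i i rfl
    omega⟩
  have hm : Antitone (fun i => (m i : ℕ)) := by
    have hstep : ∀ k (i j : Fin n), (j : ℕ) = i + k → (b j : ℕ) + k ≤ b i := by
      intro k
      induction k with
      | zero => intro i j h; have : i = j := Fin.ext (by omega)
                rw [this]; omega
      | succ k ih =>
        intro i j hi
        have h1 := ih i ⟨i + k, by omega⟩ rfl
        have h2 := hb (i := ⟨i + k, by omega⟩) (j := j) (by rw [Fin.lt_def]; simp; omega)
        omega
    intro i j hij
    have hij' : (i : ℕ) ≤ j := hij
    have := hstep (j - i) i j (by omega)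
    simp only [m]
    omega
  have hmb : ∀ i, ef m (Sum.inl i) = b i := by
    intro i
    have := hlo _ i rfl
    apply Fin.ext
    simp only [ef, m]
    omega
  let Q : Equiv.Perm (Fin n ⊕ Fin n) := P.trans (ee m hm).symm
  have hQ : Set.MapsTo Q (Set.range Sum.inl) (Set.range Sum.inl) := by
    rintro _ ⟨i, rfl⟩
    refine ⟨Fin.rev ((Tuple.sort a).symm i), ?_⟩
    simp only [Q, Equiv.trans_apply]
    rw [Equiv.eq_symm_apply, ee_apply, hmb]
    simp [b, a]
  obtain ⟨⟨σ, τ⟩, hst⟩ := Equiv.Perm.mem_sumCongrHom_range_of_perm_mapsTo_inl hQ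
  refine ⟨⟨⟨m, hm⟩, σ, τ⟩, ?_⟩
  have : Equiv.Perm.sumCongr σ τ = Q := hst
  simp only [pp, this, Q]
  ext x
  simp

/-- the bialternant numerator -/
def al {n : ℕ} {R : Type*} [CommRing R] (m : Fin n → ℕ) (w : Fin n → R) : R :=
  Matrix.det (Matrix.of fun i j : Fin n => w j ^ (m i + (n - 1 - (i : ℕ))))

/-- Vandermonde product -/
def vd {n : ℕ} {R : Type*} [CommRing R] (w : Fin n → R) : R :=
  ∏ p ∈ Finset.univ.filter (fun p : Fin n × Fin n => p.1 < p.2), (w p.2 - w p.1)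

lemma vd_eq {n : ℕ} {R : Type*} [CommRing R] (w : Fin n → R) :
    vd w = ∏ i, ∏ j ∈ Finset.Ioi i, (w j - w i) := by
  unfold vd
  rw [Finset.prod_filter, Fintype.prod_prod_type]
  refine Finset.prod_congr rfl fun i _ => ?_
  rw [← Finset.prod_filter]
  congr 1
  ext j
  simp

lemma det_M {n : ℕ} {R : Type*} [CommRing R] (U V : Fin n → R) :
    (Matrix.projVandermonde (Fin.append U (fun _ => 1)) (Fin.append (fun _ => 1) (fun j => - V j))).det
      = vd U * (∏ i, ∏ j, (1 + U i * V j)) * vd V := by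
  rw [Matrix.det_projVandermonde, prod_split, vd_eq, vd_eq]
  simp only [Fin.append_left, Fin.append_right]
  congr 1
  · congr 1
    · simp
    · refine Finset.prod_congr rfl fun i _ => Finset.prod_congr rfl fun j hj => ?_
      ring
  · refine Finset.prod_congr rfl fun i _ => Finset.prod_congr rfl fun j hj => ?_
    ring

lemma sign_pp {n : ℕ} (x) : Equiv.Perm.sign (finSumFinEquiv.symm.trans (pp (n := n) x)) =
    Equiv.Perm.sign (finSumFinEquiv.symm.trans (ee x.1.1 x.1.2)) *
      (Equiv.Perm.sign x.2.1 * Equiv.Perm.sign x.2.2) := by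
  rw [← Equiv.Perm.sign_sumCongr, ← Equiv.Perm.sign_permCongr finSumFinEquiv, ← Equiv.Perm.sign_mul]
  congr 1
  ext y
  simp [pp, Equiv.permCongr_apply]

lemma det_M2 {n : ℕ} {R : Type*} [CommRing R] (U V : Fin n → R) :
    (Matrix.projVandermonde (Fin.append U (fun _ => 1)) (Fin.append (fun _ => 1) (fun j => - V j))).det
      = ∑ m : {m : Fin n → Fin (n + 1) // Antitone (fun i => (m i : ℕ))},
        al (fun i => (m.1 i : ℕ)) U * al (cj m.1) V := by
  rw [← Matrix.det_transpose, Matrix.det_apply']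
  rw [← (Equiv.equivCongr finSumFinEquiv (Equiv.refl (Fin (n + n)))).sum_comp]
  rw [← (Equiv.ofBijective pp ⟨pp_inj, pp_surj⟩).sum_comp, Fintype.sum_prod_type]
  refine Finset.sum_congr rfl fun m _ => ?_
  unfold al
  rw [Matrix.det_apply', Matrix.det_apply', Finset.sum_mul_sum, Fintype.sum_prod_type]
  refine Finset.sum_congr rfl fun σ _ => Finset.sum_congr rfl fun τ _ => ?_
  have hs : Equiv.Perm.sign ((Equiv.equivCongr finSumFinEquiv (Equiv.refl (Fin (n + n))))
      ((Equiv.ofBijective pp ⟨pp_inj, pp_surj⟩) (m, σ, τ))) =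
      (∏ j : Fin n, (-1) ^ (cj m.1 j + (n - 1 - (j : ℕ)))) *
      (Equiv.Perm.sign σ * Equiv.Perm.sign τ) := by
    refine (sign_pp (m, σ, τ)).trans ?_
    rw [sign_ee, ← Finset.prod_mul_distrib]
    congr 1
    refine Finset.prod_congr rfl fun j _ => ?_
    rw [Finset.prod_const, Fin.card_Ioi, pow_add, mul_comm]
  have hp : ∀ i, ((Equiv.equivCongr finSumFinEquiv (Equiv.refl (Fin (n + n))))
      ((Equiv.ofBijective pp ⟨pp_inj, pp_surj⟩) (m, σ, τ))) i =
      ef m.1 (Equiv.Perm.sumCongr σ τ (finSumFinEquiv.symm i)) := fun i => rfl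
  rw [hs, Fin.prod_univ_add]
  have hU : (∏ i : Fin n, (Matrix.projVandermonde (Fin.append U (fun _ => 1))
      (Fin.append (fun _ => 1) (fun j => - V j))).transpose
      (((Equiv.equivCongr finSumFinEquiv (Equiv.refl (Fin (n + n))))
      ((Equiv.ofBijective pp ⟨pp_inj, pp_surj⟩) (m, σ, τ))) (Fin.castAdd n i)) (Fin.castAdd n i)) =
      ∏ i : Fin n, U i ^ ((m.1 (σ i) : ℕ) + (n - 1 - (σ i : ℕ))) := by
    refine Finset.prod_congr rfl fun i _ => ?_
    rw [hp, Matrix.transpose_apply, Matrix.projVandermonde_apply]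
    simp [ef]
  have hV : (∏ i : Fin n, (Matrix.projVandermonde (Fin.append U (fun _ => 1))
      (Fin.append (fun _ => 1) (fun j => - V j))).transpose
      (((Equiv.equivCongr finSumFinEquiv (Equiv.refl (Fin (n + n))))
      ((Equiv.ofBijective pp ⟨pp_inj, pp_surj⟩) (m, σ, τ))) (Fin.natAdd n i)) (Fin.natAdd n i)) =
      (∏ j : Fin n, (-1) ^ (cj m.1 j + (n - 1 - (j : ℕ)))) *
      ∏ i : Fin n, V i ^ (cj m.1 (τ i) + (n - 1 - (τ i : ℕ))) := by
    rw [← Equiv.prod_comp τ (fun j => (-1 : R) ^ (cj m.1 j + (n - 1 - (j : ℕ)))),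
      ← Finset.prod_mul_distrib]
    refine Finset.prod_congr rfl fun i _ => ?_
    rw [hp, Matrix.transpose_apply, Matrix.projVandermonde_apply, ← mul_pow, neg_one_mul]
    have h1 := cj_le m.1 (τ i)
    have h2 : n + n - (n + (τ i : ℕ) - cj m.1 (τ i) + 1) =
      cj m.1 (τ i) + (n - 1 - (τ i : ℕ)) := by omega
    simp only [Fin.append_right, finSumFinEquiv_symm_apply_natAdd, Equiv.Perm.sumCongr_apply,
      Sum.map_inr, ef, Fin.val_rev, h2, one_pow, one_mul]
  rw [hU, hV]
  have hone : (∏ j : Fin n, (-1 : R) ^ (cj m.1 j + (n - 1 - (j : ℕ)))) *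
      (∏ j : Fin n, (-1 : R) ^ (cj m.1 j + (n - 1 - (j : ℕ)))) = 1 := by
    rw [← Finset.prod_mul_distrib]
    refine Finset.prod_eq_one fun j _ => ?_
    rw [← mul_pow]
    simp
  simp only [Matrix.transpose_apply, Matrix.of_apply]
  push_cast
  linear_combination (((Equiv.Perm.sign σ : ℤ) : R) * ((Equiv.Perm.sign τ : ℤ) : R) *
    (∏ i : Fin n, U i ^ ((m.1 (σ i) : ℕ) + (n - 1 - (σ i : ℕ)))) *
    ∏ i : Fin n, V i ^ (cj m.1 (τ i) + (n - 1 - (τ i : ℕ)))) * hone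

lemma vd_ne_zero {n : ℕ} {K : Type*} [Field K] (w : Fin n → K) (hw : Function.Injective w) :
    vd w ≠ 0 := by
  unfold vd
  rw [Finset.prod_ne_zero_iff]
  intro p hp
  rw [Finset.mem_filter] at hp
  exact sub_ne_zero.mpr fun h => hp.2.ne' (hw h)

lemma main {n : ℕ} {K : Type*} [Field K] (U V : Fin n → K) (hU : Function.Injective U)
    (hV : Function.Injective V) : (∏ i : Fin n, ∏ j : Fin n, (1 + U i * V j)) =
    ∑ m : Fin n → Fin (n + 1),
      if Antitone (fun i => (m i : ℕ)) then
        (al (fun i => (m i : ℕ)) U / vd U) * (al (cj m) V / vd V)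
      else 0 := by
  have h1 := vd_ne_zero U hU
  have h2 := vd_ne_zero V hV
  have h3 := (det_M U V).symm.trans (det_M2 U V)
  have h4 : (∏ i : Fin n, ∏ j : Fin n, (1 + U i * V j)) =
      (∑ m : {m : Fin n → Fin (n + 1) // Antitone (fun i => (m i : ℕ))},
        al (fun i => (m.1 i : ℕ)) U * al (cj m.1) V) / (vd U * vd V) := by
    rw [← h3]
    field_simp
  rw [h4, Finset.sum_div, ← Finset.sum_filter]
  rw [← Finset.sum_subtype_eq_sum_filter]
  refine Finset.sum_congr (by ext; simp) fun m _ => ?_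
  rw [mul_div_mul_comm]

end DualCauchy

/-- Dual Cauchy product identity: `∏_{i,j=1}^n (1 + u_i v_j) = ∑_m s_m(u) s_{m'}(v)`,
the sum over partitions `m` fitting in an `n×n` box, with `m'` the conjugate partition
`m'_j = #{i : m_i ≥ j}`. Stated in the fraction field of `ℤ[u,v]`, where the Schur
polynomial is Cauchy's bialternant `s_m(u) = det(u_j^{m_i+n-i}) / V(u)`. -/
theorem stmt19 (n : ℕ) (hn : 1 ≤ n) :
    let K := FractionRing (MvPolynomial (Fin n ⊕ Fin n) ℤ)
    let U : Fin n → K := fun i =>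
      algebraMap (MvPolynomial (Fin n ⊕ Fin n) ℤ) K (MvPolynomial.X (Sum.inl i))
    let V : Fin n → K := fun j =>
      algebraMap (MvPolynomial (Fin n ⊕ Fin n) ℤ) K (MvPolynomial.X (Sum.inr j))
    let vdm : (Fin n → K) → K := fun w =>
      ∏ p ∈ Finset.univ.filter (fun p : Fin n × Fin n => p.1 < p.2), (w p.2 - w p.1)
    let schur : (Fin n → ℕ) → (Fin n → K) → K := fun m w =>
      Matrix.det (Matrix.of fun i j : Fin n => w j ^ (m i + (n - 1 - (i : ℕ)))) / vdm w
    (∏ i : Fin n, ∏ j : Fin n, (1 + U i * V j)) =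
    ∑ m : Fin n → Fin (n + 1),
      if Antitone (fun i => (m i : ℕ)) then
        schur (fun i => (m i : ℕ)) U *
        schur (fun j => (Finset.univ.filter
          (fun i : Fin n => (j : ℕ) + 1 ≤ (m i : ℕ))).card) V
      else 0 := by
  intro K U V vdm schur
  refine DualCauchy.main U V ?_ ?_
  · intro i j h
    exact Sum.inl_injective (MvPolynomial.X_injective (IsFractionRing.injective _ K h))
  · intro i j h
    exact Sum.inr_injective (MvPolynomial.X_injective (IsFractionRing.injective _ K h))
end
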